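/- Let L be a finite ULD lattice with meet-irreducibles M and let H be the undirected simple graph with vertex set M in which distinct m₁, m₂ are adjacent iff there exist x₁, x₂, x₃ ∈ L with x₁ ⋖ x₂, x₁ ⋖ x₃, 𝔪(x₁,x₂) = m₁ and 𝔪(x₁,x₃) = m₂. If L ∈ L(CFG) and H is a complete graph, then every chip firing game reaching a unique fixed point whose configuration space is order-isomorphic to L is simple. -/

import Mathlib

open Classical

section CFGdefs

variable {V : Type*}

/-- Out-degree of a vertex in a directed multigraph with edge multiplicities `E`. -/
noncomputable def outDeg (E : V → V → ℕ) (v : V) : ℕ := ∑ᶠ u, E v u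

/-- A vertex is a sink if all its outgoing edges are loops. -/
def IsSink (E : V → V → ℕ) (v : V) : Prop := outDeg E v = E v v

/-- A vertex is firable in configuration `c`. -/
def Firable (E : V → V → ℕ) (c : V → ℕ) (v : V) : Prop :=
  ¬ IsSink E v ∧ outDeg E v ≤ c v

/-- The result of firing vertex `v` in configuration `c`. -/
noncomputable def fire (E : V → V → ℕ) (c : V → ℕ) (v : V) : V → ℕ :=
  fun u => if u = v then c v - outDeg E v + E v v else c u + E v u

/-- The configuration obtained by firing a list of vertices in order. -/
noncomputable def fireList (E : V → V → ℕ) : (V → ℕ) → List V → (V → ℕ)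
  | c, [] => c
  | c, v :: l => fireList E (fire E c v) l

/-- A list of vertices is a valid firing sequence from `c`. -/
def ValidSeq (E : V → V → ℕ) : (V → ℕ) → List V → Prop
  | _, [] => True
  | c, v :: l => Firable E c v ∧ ValidSeq E (fire E c v) l

/-- `c'` is reachable from `c` by a finite sequence of firings. -/
def Reaches (E : V → V → ℕ) (c c' : V → ℕ) : Prop :=
  ∃ l : List V, ValidSeq E c l ∧ fireList E c l = c'

/-- A configuration with no firable vertex. -/
def FixedPt (E : V → V → ℕ) (c : V → ℕ) : Prop := ∀ v, ¬ Firable E c v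

/-- The chip firing game `CFG(G,O)` reaches a unique fixed point. -/
def ReachesUFP (E : V → V → ℕ) (O : V → ℕ) : Prop :=
  ∃ fp : V → ℕ, Reaches E O fp ∧ FixedPt E fp ∧ ∀ c, Reaches E O c → Reaches E c fp

/-- The game is simple: in every firing sequence from `O` to the fixed point,
each vertex fires at most once. -/
def SimpleCFG (E : V → V → ℕ) (O : V → ℕ) : Prop :=
  ∀ l : List V, ValidSeq E O l → FixedPt E (fireList E O l) → l.Nodup

/-- Single firing step from `c` to `c'` by firing vertex `v`. -/
def FireStep (E : V → V → ℕ) (c : V → ℕ) (v : V) (c' : V → ℕ) : Prop :=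
  Firable E c v ∧ fire E c v = c'

/-- The partial order `L` is order-isomorphic to the configuration space of
`CFG(G,O)` ordered by reachability. -/
def Generates (E : V → V → ℕ) (O : V → ℕ) (L : Type*) [PartialOrder L] : Prop :=
  ∃ f : L ≃ {c : V → ℕ // Reaches E O c},
    ∀ a b : L, a ≤ b ↔ Reaches E (f a).val (f b).val

/-- The support graph is connected (as an undirected graph). -/
def ConnectedG (E : V → V → ℕ) : Prop :=
  ∀ u v : V, Relation.ReflTransGen (fun a b => 0 < E a b ∨ 0 < E b a) u v

/-- The support graph together with its initial data is an Abelian Sandpile Model. -/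
def IsASM (E : V → V → ℕ) : Prop :=
  ConnectedG E ∧ ∃ s : V, IsSink E s ∧ (∀ v, IsSink E v → v = s) ∧
    ∀ v₁ v₂ : V, v₁ ≠ v₂ → v₁ ≠ s → v₂ ≠ s → E v₁ v₂ = E v₂ v₁

/-- The directed multigraph has no directed cycle. -/
def AcyclicG (E : V → V → ℕ) : Prop :=
  ∀ v : V, ¬ Relation.TransGen (fun a b => 0 < E a b) v v

end CFGdefs

/-- `L` is generated by some chip firing game reaching a unique fixed point. -/
def MemLCFG (L : Type*) [PartialOrder L] : Prop :=
  ∃ (V : Type) (_ : Finite V) (E : V → V → ℕ) (O : V → ℕ),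
    ReachesUFP E O ∧ Generates E O L

/-- `L` is generated by some Abelian Sandpile Model reaching a unique fixed point. -/
def MemLASM (L : Type*) [PartialOrder L] : Prop :=
  ∃ (V : Type) (_ : Finite V) (E : V → V → ℕ) (O : V → ℕ),
    IsASM E ∧ ReachesUFP E O ∧ Generates E O L

section Latticedefs

variable {L : Type*} [Lattice L]

/-- `m` is meet-irreducible: it has exactly one upper cover. -/
def MeetIrred (m : L) : Prop := ∃! y, m ⋖ y

/-- `j` is join-irreducible: it has exactly one lower cover. -/
def JoinIrred (j : L) : Prop := ∃! y, y ⋖ j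

/-- The set `M_x \ M_y` of meet-irreducibles above `x` but not above `y`. -/
def MsetDiff (x y : L) : Set L := {m | MeetIrred m ∧ x ≤ m ∧ ¬ y ≤ m}

/-- The set `M \ M_a` of meet-irreducibles not above `a`. -/
def MnotAbove (a : L) : Set L := {m | MeetIrred m ∧ ¬ a ≤ m}

/-- `x⁺`: the join of all upper covers of `x`. -/
noncomputable def uplus [Fintype L] [OrderBot L] (x : L) : L :=
  Finset.univ.sup (fun y => if x ⋖ y then y else ⊥)

/-- `L` is upper locally distributive: for every `x ≠ ⊤` the interval `[x, x⁺]`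
is isomorphic to a Boolean lattice (a hypercube). -/
def IsULD (L : Type*) [Lattice L] [Fintype L] [BoundedOrder L] : Prop :=
  ∀ x : L, x ≠ ⊤ → ∃ n : ℕ, Nonempty (↥(Set.Icc x (uplus x)) ≃o Set (Fin n))

/-- `𝔘_m`: the minimal elements of `{x : ∃ y, x ⋖ y and 𝔪(x,y) = m}`. -/
def Uset (m : L) : Set L :=
  {x | Minimal (fun z => ∃ y, z ⋖ y ∧ MsetDiff z y = {m}) x}

/-- `𝔏_m`: the maximal elements of `{x : a ≰ x for every a ∈ 𝔘_m}`. -/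
def Lset (m : L) : Set L :=
  {x | Maximal (fun z => ∀ a ∈ Uset m, ¬ a ≤ z) x}

/-- `(w, e)` is a (non-negative integer) solution of the system `E(m)`. -/
def SolvesE [OrderBot L] (m : L) (w : ℕ) (e : L → ℕ) : Prop :=
  (Uset m = {(⊥ : L)} → 1 ≤ w) ∧
  (Uset m ≠ {(⊥ : L)} →
    (∀ a ∈ Lset m, (∑ᶠ x ∈ MnotAbove a, e x) < w) ∧
    (∀ a ∈ Uset m, w ≤ ∑ᶠ x ∈ MnotAbove a, e x))

/-- The system `E(m)` has a non-negative integer solution. -/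
def HasSolE [OrderBot L] (m : L) : Prop := ∃ w e, SolvesE m w e

/-- The variable `e_{x,m}` occurs in the system `𝔈(m)`. -/
def VarOccurs [OrderBot L] (x m : L) : Prop :=
  MeetIrred m ∧ Uset m ≠ {(⊥ : L)} ∧ ∃ a ∈ Uset m ∪ Lset m, x ∈ MnotAbove a

/-- `(W, Ee)` is a non-negative integer solution of the system `Ω`. -/
def SolvesOmega [OrderBot L] (W : L → ℕ) (Ee : L → L → ℕ) : Prop :=
  (∀ m : L, MeetIrred m → SolvesE m (W m) (fun x => Ee x m)) ∧
  (∀ m₁ m₂ : L, m₁ ≠ m₂ → VarOccurs m₁ m₂ → VarOccurs m₂ m₁ → Ee m₁ m₂ = Ee m₂ m₁)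

/-- The edge relation of the directed graph `𝒢` on the meet-irreducibles. -/
def Gedge (m₁ m₂ : L) : Prop :=
  MeetIrred m₁ ∧ MeetIrred m₂ ∧ ∃ a ∈ Uset m₂, m₁ ∈ MnotAbove a

end Latticedefs

/-- The system `Ω` has a non-negative integer solution. -/
def HasSolOmega (L : Type*) [Lattice L] [OrderBot L] : Prop :=
  ∃ W Ee, SolvesOmega (L := L) W Ee

/-- The directed graph `𝒢` on the meet-irreducibles is acyclic. -/
def GAcyclic (L : Type*) [Lattice L] : Prop :=
  ∀ m : L, ¬ Relation.TransGen (Gedge (L := L)) m m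

section ChipFiring

variable {V : Type*} {E : V → V → ℕ} {c : V → ℕ} {v w : V}

theorem fire_apply_self_lt [Finite V] (h : Firable E c v) : fire E c v v < c v := by
  have hle : E v v ≤ outDeg E v :=
    single_le_finsum v (Set.toFinite _) fun _ => Nat.zero_le _
  obtain ⟨hs, hd⟩ := h
  have hne : outDeg E v ≠ E v v := hs
  simp only [fire, if_true]
  omega

theorem le_fire_apply_of_ne (h : v ≠ w) : c v ≤ fire E c w v := by
  simp [fire, h]

theorem Firable.fire_of_ne (hv : Firable E c v) (h : v ≠ w) : Firable E (fire E c w) v :=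
  ⟨hv.1, hv.2.trans (le_fire_apply_of_ne h)⟩

theorem fire_comm (hv : Firable E c v) (hw : Firable E c w) (h : v ≠ w) :
    fire E (fire E c w) v = fire E (fire E c v) w := by
  have h1 := hv.2
  have h2 := hw.2
  funext u
  by_cases hu : u = v
  · subst hu
    simp only [fire, if_true, h, h.symm, if_false]
    omega
  · by_cases hu' : u = w
    · subst hu'
      simp only [fire, if_true, h, h.symm, if_false]
      omega
    · simp only [fire, hu, hu', if_false]
      omega

theorem Reaches.head {d : V → ℕ} (h : Firable E c v) (hd : Reaches E (fire E c v) d) :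
    Reaches E c d := by
  obtain ⟨l, hl, rfl⟩ := hd
  exact ⟨v :: l, ⟨h, hl⟩, rfl⟩

theorem Firable.reaches_fire (h : Firable E c v) : Reaches E c (fire E c v) :=
  Reaches.head h ⟨[], trivial, rfl⟩

theorem fireList_append (l l' : List V) :
    fireList E c (l ++ l') = fireList E (fireList E c l) l' := by
  induction l generalizing c with
  | nil => rfl
  | cons a l ih => exact ih

theorem validSeq_append {l l' : List V} :
    ValidSeq E c (l ++ l') ↔ ValidSeq E c l ∧ ValidSeq E (fireList E c l) l' := by
  induction l generalizing c with
  | nil => simp [ValidSeq, fireList]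
  | cons a l ih => simp [ValidSeq, fireList, ih, and_assoc]

theorem Reaches.trans {d e : V → ℕ} (h : Reaches E c d) (h' : Reaches E d e) :
    Reaches E c e := by
  obtain ⟨l, hl, rfl⟩ := h
  obtain ⟨l', hl', rfl⟩ := h'
  exact ⟨l ++ l', validSeq_append.2 ⟨hl, hl'⟩, fireList_append l l'⟩

/-- A firable vertex stays firable, without losing chips, along any path to a configuration
that cannot be reached by firing that vertex first. -/
theorem Firable.of_reaches {d : V → ℕ} (hv : Firable E c v) (hd : Reaches E c d)
    (h : ¬ Reaches E (fire E c v) d) : Firable E d v ∧ c v ≤ d v := by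
  obtain ⟨l, hl, rfl⟩ := hd
  induction l generalizing c with
  | nil => exact ⟨hv, le_rfl⟩
  | cons w l ih =>
    obtain ⟨hw, hl⟩ := hl
    have hne : v ≠ w := by
      rintro rfl
      exact h ⟨l, hl, rfl⟩
    obtain ⟨h1, h2⟩ := ih (hv.fire_of_ne hne) hl fun hr =>
      h (Reaches.head (hw.fire_of_ne hne.symm) (fire_comm hv hw hne ▸ hr))
    exact ⟨h1, (le_fire_apply_of_ne hne).trans h2⟩

end ChipFiring

theorem exists_meetIrred_of_not_le {L : Type*} [Lattice L] [Finite L] {x y : L}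
    (h : ¬ y ≤ x) : ∃ m, MeetIrred m ∧ x ≤ m ∧ ¬ y ≤ m := by
  obtain ⟨m, hxm, hm⟩ := Finite.exists_le_maximal (p := fun z => ¬ y ≤ z) h
  have above : ∀ z, m < z → m ⊔ y ≤ z := fun z hz =>
    sup_le hz.le (not_not.1 fun hy => hm.not_prop_of_gt hz hy)
  have hlt : m < m ⊔ y := left_lt_sup.2 hm.prop
  refine ⟨m, ⟨m ⊔ y, ⟨hlt, fun z hz hz' => (above z hz).not_gt hz'⟩, fun z hz => ?_⟩, hxm, hm.prop⟩
  exact ((above z hz.lt).eq_of_not_lt fun hlt' => hz.2 hlt hlt').symm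

theorem MeetIrred.exists_covBy_forall_lt {L : Type*} [Lattice L] [Finite L] {m : L}
    (h : MeetIrred m) : ∃ y, m ⋖ y ∧ ∀ z, m < z → y ≤ z := by
  obtain ⟨y, hy, huniq⟩ := h
  refine ⟨y, hy, fun z hz => ?_⟩
  obtain ⟨a, ha, haz⟩ := exists_covBy_le_of_lt hz
  exact huniq a ha ▸ haz

section Representation

variable {V : Type*} {E : V → V → ℕ} {O : V → ℕ} {L : Type*}
  {f : L ≃ {c : V → ℕ // Reaches E O c}} {v w : V}

theorem lt_of_fire_eq [Finite V] [Lattice L]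
    (hf : ∀ a b : L, a ≤ b ↔ Reaches E (f a).val (f b).val) {x y : L}
    (hv : Firable E (f x).val v) (hy : fire E (f x).val v = (f y).val) : x < y := by
  refine lt_of_le_of_ne ((hf x y).2 (hy ▸ hv.reaches_fire)) ?_
  rintro rfl
  exact (fire_apply_self_lt hv).ne (congrFun hy v)

theorem exists_eq_fire (x : L) (hv : Firable E (f x).val v) :
    ∃ y, fire E (f x).val v = (f y).val :=
  ⟨f.symm ⟨_, (f x).2.trans hv.reaches_fire⟩, by simp⟩

theorem CovBy.exists_fire_eq [Finite V] [Lattice L]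
    (hf : ∀ a b : L, a ≤ b ↔ Reaches E (f a).val (f b).val) {x y : L}
    (h : x ⋖ y) : ∃ v, Firable E (f x).val v ∧ fire E (f x).val v = (f y).val := by
  obtain ⟨l, hl, hy⟩ := (hf x y).1 h.le
  cases l with
  | nil => exact absurd (f.injective (Subtype.ext hy)) h.ne
  | cons v l =>
    obtain ⟨hv, hl⟩ := hl
    obtain ⟨z, hz⟩ := exists_eq_fire x hv
    have hzy : z ≤ y := (hf z y).2 (hz ▸ ⟨l, hl, hy⟩)
    rw [hzy.eq_of_not_lt (h.2 (lt_of_fire_eq hf hv hz))] at hz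
    exact ⟨v, hv, hz⟩

theorem eq_of_reaches_fire [Finite V] [Lattice L]
    (hf : ∀ a b : L, a ≤ b ↔ Reaches E (f a).val (f b).val) {x : L}
    (hv : Firable E (f x).val v) (hw : Firable E (f x).val w)
    (h : Reaches E (fire E (f x).val w) (fire E (f x).val v)) : v = w := by
  by_contra hne
  have hnot : ¬ Reaches E (fire E (fire E (f x).val w) v) (fire E (f x).val v) := by
    obtain ⟨y, hy⟩ := exists_eq_fire x hv
    have hwy : Firable E (f y).val w := hy ▸ hw.fire_of_ne (Ne.symm hne)
    obtain ⟨z, hz⟩ := exists_eq_fire y hwy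
    rw [fire_comm hv hw hne, hy, hz, ← hf]
    exact (lt_of_fire_eq hf hwy hz).not_ge
  have h1 := ((hv.fire_of_ne hne).of_reaches h hnot).2
  exact absurd ((le_fire_apply_of_ne hne).trans h1) (fire_apply_self_lt hv).not_ge

theorem MeetIrred.firable_unique [Finite V] [Lattice L] [Finite L]
    (hf : ∀ a b : L, a ≤ b ↔ Reaches E (f a).val (f b).val) {m : L} (hm : MeetIrred m)
    (hv : Firable E (f m).val v) (hw : Firable E (f m).val w) : v = w := by
  obtain ⟨y, hy, hle⟩ := hm.exists_covBy_forall_lt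
  obtain ⟨u, hu, huy⟩ := hy.exists_fire_eq hf
  have key : ∀ v, Firable E (f m).val v → v = u := fun v hv => by
    obtain ⟨z, hz⟩ := exists_eq_fire m hv
    refine eq_of_reaches_fire hf hv hu ?_
    rw [huy, hz, ← hf]
    exact hle z (lt_of_fire_eq hf hv hz)
  rw [key v hv, key w hw]

theorem firable_of_mem_msetDiff [Lattice L]
    (hf : ∀ a b : L, a ≤ b ↔ Reaches E (f a).val (f b).val)
    {x y m : L} (hm : m ∈ MsetDiff x y) (hv : Firable E (f x).val v)
    (hy : fire E (f x).val v = (f y).val) : Firable E (f m).val v :=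
  (hv.of_reaches ((hf x m).1 hm.2.1) (by rw [hy, ← hf]; exact hm.2.2)).1

end Representation

theorem List.exists_append_of_not_nodup {α : Type*} {l : List α} (h : ¬ l.Nodup) :
    ∃ a l₁ l₂ l₃, l = l₁ ++ a :: (l₂ ++ a :: l₃) := by
  obtain ⟨a, ha⟩ := List.exists_duplicate_iff_not_nodup.2 h
  refine ⟨a, ?_⟩
  clear h
  induction ha with
  | cons_mem ha =>
    obtain ⟨s, t, rfl⟩ := List.append_of_mem ha
    exact ⟨[], s, t, rfl⟩
  | @cons_duplicate b l _ ih =>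
    obtain ⟨l₁, l₂, l₃, rfl⟩ := ih
    exact ⟨b :: l₁, l₂, l₃, rfl⟩

/-- if `L ∈ L(CFG)` and the graph `H` on the meet-irreducibles (with
`m₁ ~ m₂` iff some element has two upper covers labeled `m₁` and `m₂`) is complete,
then every CFG reaching a unique fixed point generating `L` is simple. -/
theorem stmt12 {L : Type*} [Lattice L] [Fintype L] [BoundedOrder L]
    (hULD : IsULD L) (hLCFG : MemLCFG L)
    (hH : ∀ m₁ m₂ : L, MeetIrred m₁ → MeetIrred m₂ → m₁ ≠ m₂ →
      ∃ x₁ x₂ x₃ : L, x₁ ⋖ x₂ ∧ x₁ ⋖ x₃ ∧ MsetDiff x₁ x₂ = {m₁} ∧ MsetDiff x₁ x₃ = {m₂})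
    {V : Type*} [Finite V] (E : V → V → ℕ) (O : V → ℕ)
    (hUFP : ReachesUFP E O) (hgen : Generates E O L) :
    SimpleCFG E O := by
  obtain ⟨f, hf⟩ := hgen
  intro l hl _
  by_contra hnd
  obtain ⟨v, l₁, l₂, l₃, rfl⟩ := List.exists_append_of_not_nodup hnd
  obtain ⟨hl₁, hv, hl⟩ := validSeq_append.1 hl
  obtain ⟨hl₂, hv', -⟩ := validSeq_append.1 hl
  obtain ⟨x, hx⟩ : ∃ x, (f x).val = fireList E O l₁ :=
    ⟨f.symm ⟨_, l₁, hl₁, rfl⟩, by simp⟩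
  rw [← hx] at hv hl₂ hv'
  obtain ⟨y, hy⟩ := exists_eq_fire x hv
  rw [hy] at hl₂ hv'
  obtain ⟨x', hx'⟩ : ∃ x', (f x').val = fireList E (f y).val l₂ :=
    ⟨f.symm ⟨_, (f y).2.trans ⟨l₂, hl₂, rfl⟩⟩, by simp⟩
  have hyx' : y ≤ x' := (hf y x').2 (hx' ▸ ⟨l₂, hl₂, rfl⟩)
  rw [← hx'] at hv'
  obtain ⟨y', hy'⟩ := exists_eq_fire x' hv'
  obtain ⟨m₁, hm₁⟩ := exists_meetIrred_of_not_le (lt_of_fire_eq hf hv hy).not_ge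
  obtain ⟨m₂, hm₂⟩ := exists_meetIrred_of_not_le (lt_of_fire_eq hf hv' hy').not_ge
  have hne : m₁ ≠ m₂ := by
    rintro rfl
    exact hm₁.2.2 (hyx'.trans hm₂.2.1)
  obtain ⟨z, z₁, z₂, hz₁, hz₂, hd₁, hd₂⟩ := hH m₁ m₂ hm₁.1 hm₂.1 hne
  obtain ⟨u₁, hu₁, hf₁⟩ := hz₁.exists_fire_eq hf
  obtain ⟨u₂, hu₂, hf₂⟩ := hz₂.exists_fire_eq hf
  have hv₁ : u₁ = v := hm₁.1.firable_unique hf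
    (firable_of_mem_msetDiff hf (by rw [hd₁]; rfl) hu₁ hf₁) (firable_of_mem_msetDiff hf hm₁ hv hy)
  have hv₂ : u₂ = v := hm₂.1.firable_unique hf
    (firable_of_mem_msetDiff hf (by rw [hd₂]; rfl) hu₂ hf₂)
    (firable_of_mem_msetDiff hf hm₂ hv' hy')
  have hz : z₁ = z₂ := f.injective (Subtype.ext (by rw [← hf₁, ← hf₂, hv₁, hv₂]))
  subst hz
  exact hne (Set.singleton_injective (hd₁.symm.trans hd₂))
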